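/- Let d ≥ 3 be a prime, ω = exp(2πi/d), and let λ_n be the canonical phases: λ_0 = 1 and λ_n = ε_d^{−1} (n/d)^{−1} exp(−πi·g(n,d)/(24d)) for n ∈ {1,…,d−1}. Consider the supremum, over all dimensions D_A, D_B ∈ ℕ, all density matrices ρ on ℂ^{D_A} ⊗ ℂ^{D_B}, and all families of d-outcome POVMs {F^j_a}_{a} (j = 0,…,d−1) on ℂ^{D_A} and {G^k_b}_b (k = 0,…,d−1) on ℂ^{D_B}, of the quantity tr(W_d ρ), where W_d = (1/d³) ∑_{n=0}^{d−1} λ_n ∑_{j,k=0}^{d−1} ω^{njk} A_j^{(n)} ⊗ B_k^{(n)} with A_j^{(n)} = ∑_a ω^{an} F^j_a and B_k^{(n)} = ∑_b ω^{bn} G^k_b. This supremum equals 1/d + (d−1)/(d√d) and is attained (by a realisation of local dimension d). -/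

import Mathlib

/-!
Both inequalities are proved one Fourier mode `n` at a time. The mode `n = 0` is
`∑_{j,k} 1 ⊗ 1` and contributes exactly `d ^ 2`; each of the other `d - 1` modes contributes at
most `d √d`, with equality for a suitable realisation.

*Upper bound.* The Fourier coefficients `A_j`, `B_k` of POVMs are contractions
(`posSemidef_one_sub_mul_conjTranspose`). Put `C_k = d^{-1/2} λ_n ∑_j ω^{njk} A_j`, so that the mode
is `√d ∑_k C_k ⊗ B_k`. Positivity of `∑_k (C_kᴴ ⊗ 1 - 1 ⊗ B_k)ᴴ (C_kᴴ ⊗ 1 - 1 ⊗ B_k)`, together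
with the unitarity of `d^{-1/2} (ω^{njk})`, which gives `∑_k C_k C_kᴴ = ∑_j A_j A_jᴴ ≤ d`, bounds
its expectation by `d √d` (`re_trace_mode_le`). Only `|λ_n| = 1` is used here.

*Attainment.* On the maximally entangled state take rank-one measurements in bases
`d^{-1/2} ω^{-ax} t(x)` (`phasePOVM`), whose Fourier coefficients are monomial matrices. Alice uses
phases `t_j` that are quadratic in `x`, Bob uses the conjugates of phases `σ(x + k)` that are cubic
in `x`. With `y + n ≡ x (mod d)`, equality in mode `n` reduces to
`λ_n ∑_j ω^{njk} t_j(x) conj(t_j(y)) = √d σ(x + k) conj(σ(y + k))` (`fourier_alice_eq_bob`). After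
completing the square, the left side is a quadratic Gauss sum, equal to `(n/d) ε_d √d`, which
cancels the first two factors of `λ_n`; the remaining factor `exp(-πi g(n,d)/(24 d))` and the phase
left over from completing the square combine to an increment of the cubic. The last point is a
congruence modulo `48 d` (`gph_congr`, `bobExp_increment`).

*The sign of the Gauss sum.* Write `p = 2 m + 1`. The sum `∑_j ω^{a j²}` and the product
`∏_{k=1}^m ω^{km} (ω^k - 1)` have the same square `(-1)^m p` (`quadGauss_sq`, `sineProd_sq`), hence
agree up to sign. This sign is found by reducing modulo the prime above `p`: a relation between them holds modulo the cyclotomic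
polynomial, which is `(X - 1)^{p-1}` over `𝔽_p`, and the coefficients of `(X - 1)^m` are compared
(`gauss_sign_mod`). The product itself is evaluated from the positivity of the sines
(`sineProd_eval`).
-/

open Matrix Kronecker ComplexOrder

noncomputable section

/-- `ε_d = 1` if `d ≡ 1 (mod 4)` and `ε_d = i` if `d ≡ 3 (mod 4)`. -/
def epsd (d : ℕ) : ℂ := if d % 4 = 1 then 1 else Complex.I

open scoped Classical in
/-- The Legendre symbol `(a/d)` for a prime `d`. -/
def legSym (d : ℕ) (a : ℤ) : ℤ :=
  if (a : ZMod d) = 0 then 0 else if IsSquare (a : ZMod d) then 1 else -1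

/-- The function `g(n,d)` fixing the canonical phases. -/
def gph (n d : ℕ) : ℤ :=
  if n % 2 = 0 then
    (if ((n + d + 1) / 2) % 2 = 0 then
        (n : ℤ) * ((n : ℤ) ^ 2 - (d : ℤ) * ((d : ℤ) + 6) + 3)
      else (n : ℤ) * ((n : ℤ) ^ 2 - (d : ℤ) * ((d : ℤ) - 6) + 3))
  else if n % 4 = 1 then
    (n : ℤ) * ((n : ℤ) ^ 2 + 3) + 2 * (d : ℤ) ^ 2 * (-5 * (n : ℤ) + 3)
  else (n : ℤ) * ((n : ℤ) ^ 2 + 3) + 2 * (d : ℤ) ^ 2 * ((n : ℤ) + 3)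

/-! ### The quadratic Gauss sum -/

/-- A sum over `ℤ/p` is the sum over the representatives `0, …, p - 1`. -/
lemma sum_zmod_eq_range (p : ℕ) [NeZero p] {M : Type*} [AddCommMonoid M] (f : ZMod p → M) :
    ∑ x : ZMod p, f x = ∑ j ∈ Finset.range p, f (j : ZMod p) := by
  refine Finset.sum_nbij' (fun x => x.val) (fun j => (j : ZMod p)) ?_ ?_ ?_ ?_ ?_
  · intro x _; simpa using ZMod.val_lt x
  · simp
  · simp
  · intro j hj; exact ZMod.val_cast_of_lt (by simpa using hj)
  · simp

/-- The square of the quadratic Gauss sum, in the form `∑ ζ ^ (j ^ 2)`. -/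
lemma quadGauss_sq (p : ℕ) [Fact p.Prime] (hp : p ≠ 2) (ζ : ℂ) (hζ : IsPrimitiveRoot ζ p) :
    (∑ j ∈ Finset.range p, ζ ^ (j ^ 2)) ^ 2 = (-1) ^ (p / 2) * p := by
  classical
  have hF : ringChar (ZMod p) ≠ 2 := by rwa [ZMod.ringChar_zmod_n]
  set ψ : AddChar (ZMod p) ℂ := AddChar.zmodChar p hζ.pow_eq_one with hψ
  have hprim : ψ.IsPrimitive := AddChar.zmodChar_primitive_of_primitive_root p hζ
  set χ : MulChar (ZMod p) ℂ := (quadraticChar (ZMod p)).ringHomComp (Int.castRingHom ℂ) with hχ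
  have h0 : ∑ x : ZMod p, ψ x = 0 := by
    refine AddChar.sum_eq_zero_of_ne_one ?_
    have := hprim one_ne_zero
    simpa using this
  have h1 : ∑ j ∈ Finset.range p, ζ ^ (j ^ 2) = gaussSum χ ψ := by
    have e1 : ∑ j ∈ Finset.range p, ζ ^ (j ^ 2) = ∑ x : ZMod p, ψ (x ^ 2) := by
      rw [sum_zmod_eq_range p (fun x => ψ (x ^ 2))]
      refine Finset.sum_congr rfl fun j _ => ?_
      have := AddChar.zmodChar_apply' hζ.pow_eq_one (j ^ 2)
      rw [hψ, ← this]; push_cast; rfl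
    rw [e1, ← Finset.sum_fiberwise (s := Finset.univ) (g := fun x : ZMod p => x ^ 2)]
    have e2 : ∀ y : ZMod p, ∑ x ∈ Finset.univ.filter (fun x : ZMod p => x ^ 2 = y), ψ (x ^ 2)
        = ((quadraticChar (ZMod p) y : ℤ) : ℂ) * ψ y + ψ y := by
      intro y
      have h := quadraticChar_card_sqrts hF y
      have h' : ({x : ZMod p | x ^ 2 = y}.toFinset) = Finset.univ.filter (fun x => x ^ 2 = y) := by
        ext; simp
      rw [h'] at h
      have h'' : ((Finset.univ.filter (fun x : ZMod p => x ^ 2 = y)).card : ℂ)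
          = (quadraticChar (ZMod p) y : ℤ) + 1 := by exact_mod_cast h
      rw [Finset.sum_congr rfl (g := fun _ => ψ y)
        (fun x hx => by rw [(Finset.mem_filter.mp hx).2]), Finset.sum_const, nsmul_eq_mul, h'']
      ring
    rw [Finset.sum_congr rfl (fun y _ => e2 y), Finset.sum_add_distrib, h0, add_zero]
    rfl
  rw [h1, gaussSum_sq ?_ ?_ hprim, ZMod.card]
  · congr 1
    have h3 := quadraticChar_neg_one hF
    rw [ZMod.card, ZMod.χ₄_eq_neg_one_pow
      ((Nat.Prime.eq_two_or_odd (Fact.out : p.Prime)).resolve_left hp)] at h3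
    simp [hχ, MulChar.ringHomComp_apply, h3]
  · intro h
    apply quadraticChar_ne_one hF
    ext a
    have := congrArg (fun c : MulChar (ZMod p) ℂ => c a) h
    simp only [hχ, MulChar.ringHomComp_apply, MulChar.one_apply_coe, eq_intCast] at this
    rw [MulChar.one_apply_coe]
    exact_mod_cast this
  · exact (quadraticChar_isQuadratic (ZMod p)).comp _

/-- The product `∏_{k=1}^m ζ^{km}(ζ^k - 1)`, with `p = 2m+1`, has the same square as the Gauss
sum: pairing `k` with `p - k` turns the square into `± ∏_{k=1}^{p-1} (1 - ζ^k) = ± p`. -/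
lemma sineProd_sq (m : ℕ) (ζ : ℂ) (hζ : IsPrimitiveRoot ζ (2 * m + 1)) :
    (∏ k ∈ Finset.range m, ζ ^ ((k + 1) * m) * (ζ ^ (k + 1) - 1)) ^ 2
      = (-1) ^ m * ((2 * m + 1 : ℕ) : ℂ) := by
  have h1 := hζ.prod_one_sub_pow_eq_order
  rw [two_mul, Finset.prod_range_add] at h1
  rw [← Finset.prod_range_reflect (fun x => (1 - ζ ^ (m + x + 1))), ← Finset.prod_mul_distrib] at h1
  have h2 : ((2 * m + 1 : ℕ) : ℂ) = ((m + m : ℕ) : ℂ) + 1 := by push_cast; ring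
  have h3 : (-1 : ℂ) ^ m = ∏ k ∈ Finset.range m, (-1 : ℂ) := by simp
  rw [h2, ← h1, h3, ← Finset.prod_mul_distrib, ← Finset.prod_pow]
  refine Finset.prod_congr rfl fun k hk => ?_
  have hk' : k < m := Finset.mem_range.mp hk
  have e1 : ζ ^ (m + (m - 1 - k) + 1) * ζ ^ (k + 1) = 1 := by
    rw [← pow_add, ← hζ.pow_eq_one]; congr 1; omega
  have e2 : (ζ ^ ((k + 1) * m)) ^ 2 = ζ ^ (m + (m - 1 - k) + 1) := by
    have e3 : (ζ ^ ((k + 1) * m)) ^ 2 * ζ ^ (k + 1) = 1 := by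
      rw [← pow_mul, ← pow_add, show (k + 1) * m * 2 + (k + 1) = (2 * m + 1) * (k + 1) by ring,
        pow_mul, hζ.pow_eq_one, one_pow]
    have hne : ζ ^ (k + 1) ≠ 0 := fun h => by rw [h] at e1; simp at e1
    exact mul_right_cancel₀ hne (e3.trans e1.symm)
  rw [mul_pow, e2]
  linear_combination (ζ ^ (k + 1) - 2 + 1) * e1

open Polynomial in
/-- Modulo `p`, the `y ^ m`-coefficient of `∑_j (1 + y) ^ (a j²)` is `-a ^ m / m!`. -/
lemma coeff_gauss_mod (p m : ℕ) [Fact p.Prime] (hpm : p = 2 * m + 1) (a : ℕ) :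
    ((m.factorial : ZMod p)) *
      (∑ j ∈ Finset.range p, (X + 1 : (ZMod p)[X]) ^ (a * j ^ 2)).coeff m = - (a : ZMod p) ^ m := by
  have hm : 1 ≤ m := by
    have := (Fact.out : p.Prime).two_le
    omega
  set D := descPochhammer (ZMod p) m with hD
  have hDm : D.natDegree = m := descPochhammer_natDegree _ _
  have hD1 : D.coeff m = 1 := by
    have := monic_descPochhammer (ZMod p) m
    rw [Monic, leadingCoeff, ← hD, hDm] at this
    exact this
  rw [finsetSum_coeff, Finset.mul_sum]
  have h1 : ∀ j : ℕ, (m.factorial : ZMod p) * ((X + 1 : (ZMod p)[X]) ^ (a * j ^ 2)).coeff m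
      = ∑ i ∈ Finset.range (m + 1), D.coeff i * (a : ZMod p) ^ i * (j : ZMod p) ^ (2 * i) := by
    intro j
    rw [coeff_X_add_one_pow, ← Nat.cast_mul, ← Nat.descFactorial_eq_factorial_mul_choose,
      ← descPochhammer_eval_eq_descFactorial, ← hD, eval_eq_sum_range, hDm]
    refine Finset.sum_congr rfl fun i _ => ?_
    push_cast
    ring
  rw [Finset.sum_congr rfl (fun j _ => h1 j), Finset.sum_comm, Finset.sum_range_succ]
  have h2 : ∀ i ∈ Finset.range m,
      ∑ j ∈ Finset.range p, D.coeff i * (a : ZMod p) ^ i * (j : ZMod p) ^ (2 * i) = 0 := by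
    intro i hi
    have hi' := Finset.mem_range.mp hi
    rw [← Finset.mul_sum, ← sum_zmod_eq_range p (fun x => x ^ (2 * i)),
      FiniteField.sum_pow_lt_card_sub_one, mul_zero]
    rw [ZMod.card]; omega
  rw [Finset.sum_eq_zero h2, zero_add, hD1, ← Finset.mul_sum,
    ← sum_zmod_eq_range p (fun x => x ^ (2 * m))]
  have h3 : ∑ x : ZMod p, x ^ (2 * m) = -1 := by
    have e : ∀ x : ZMod p, x ^ (2 * m) = 1 - if x = 0 then 1 else 0 := by
      intro x
      split_ifs with hx
      · rw [hx, zero_pow (by omega)]; ring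
      · have := ZMod.pow_card_sub_one_eq_one hx
        rw [show 2 * m = p - 1 by omega, this]; ring
    rw [Finset.sum_congr rfl (fun x _ => e x), Finset.sum_sub_distrib]
    simp
  rw [h3]; ring

open Polynomial in
/-- Modulo `p`, the `y ^ m`-coefficient of `∏_k (1 + y)^{km} ((1 + y)^k - 1)` is `m!`, since each
factor is `k y` plus terms of higher order. -/
lemma coeff_prod_mod (R : Type*) [CommRing R] (m : ℕ) :
    (∏ k ∈ Finset.range m, (X + 1 : R[X]) ^ ((k + 1) * m) * ((X + 1) ^ (k + 1) - 1)).coeff m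
      = (m.factorial : R) := by
  have h1 : ∀ k : ℕ, (X + 1 : R[X]) ^ ((k + 1) * m) * ((X + 1) ^ (k + 1) - 1)
      = X * ((X + 1 : R[X]) ^ ((k + 1) * m) * ∑ i ∈ Finset.range (k + 1), (X + 1) ^ i) := by
    intro k
    have := mul_geom_sum (X + 1 : R[X]) (k + 1)
    rw [← this]; ring
  rw [Finset.prod_congr rfl (fun k _ => h1 k), Finset.prod_mul_distrib, Finset.prod_const,
    Finset.card_range]
  have h2 := coeff_X_pow_mul (∏ k ∈ Finset.range m,
    ((X + 1 : R[X]) ^ ((k + 1) * m) * ∑ i ∈ Finset.range (k + 1), (X + 1) ^ i)) m 0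
  rw [zero_add] at h2
  rw [h2, coeff_zero_eq_eval_zero, eval_prod, ← Finset.prod_range_add_one_eq_factorial]
  push_cast
  refine Finset.prod_congr rfl fun k _ => ?_
  simp [eval_finsetSum]

/-- Wilson's theorem in the form `m!² = (-1)^(m+1)` modulo `p = 2m + 1`. -/
lemma half_factorial_sq (p m : ℕ) [Fact p.Prime] (hpm : p = 2 * m + 1) :
    (m.factorial : ZMod p) ^ 2 = (-1) ^ (m + 1) := by
  have h := ZMod.wilsons_lemma p
  rw [show p - 1 = m + m by omega, ← Finset.prod_range_add_one_eq_factorial,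
    Finset.prod_range_add, ← Finset.prod_range_reflect (fun x => m + x + 1)] at h
  push_cast at h
  have e : ∀ k ∈ Finset.range m, ((m : ZMod p) + ((m - 1 - k : ℕ) : ZMod p) + 1)
      = (-1) * ((k : ZMod p) + 1) := by
    intro k hk
    have hk' := Finset.mem_range.mp hk
    have h1 : ((m + (m - 1 - k) + 1 + (k + 1) : ℕ) : ZMod p) = ((p : ℕ) : ZMod p) := by
      congr 1; omega
    rw [ZMod.natCast_self] at h1
    push_cast at h1
    linear_combination h1
  rw [Finset.prod_congr rfl e, Finset.prod_mul_distrib, Finset.prod_const, Finset.card_range] at h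
  have h2 : (m.factorial : ZMod p) = ∏ k ∈ Finset.range m, ((k : ZMod p) + 1) := by
    rw [← Finset.prod_range_add_one_eq_factorial]; push_cast; rfl
  rw [← h2] at h
  have h3 : ((-1 : ZMod p) ^ m) * (-1) ^ m = 1 := by rw [← mul_pow]; simp
  rw [pow_succ]
  linear_combination (-1 : ZMod p) ^ m * h - (m.factorial : ZMod p) ^ 2 * h3

open Polynomial in
/-- The sign of the Gauss sum relative to the product of sines. A relation between the two is a
polynomial relation at `ω`, hence holds modulo `cyclotomic p`, which is `(X - 1) ^ (p - 1)` in
characteristic `p`; comparing coefficients of `(X - 1) ^ m` there determines `e` modulo `p`. -/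
lemma gauss_sign_mod (p m : ℕ) [Fact p.Prime] (hpm : p = 2 * m + 1) (ω : ℂ)
    (hω : IsPrimitiveRoot ω p) (a : ℕ) (e : ℤ)
    (h : ∑ j ∈ Finset.range p, ω ^ (a * j ^ 2)
      = e * ∏ k ∈ Finset.range m, ω ^ ((k + 1) * m) * (ω ^ (k + 1) - 1)) :
    (e : ZMod p) = (-1) ^ m * (a : ZMod p) ^ m := by
  have hp1 : 1 < p := (Fact.out : p.Prime).one_lt
  set f : ℤ[X] := ∑ j ∈ Finset.range p, X ^ (a * j ^ 2)
      - C e * ∏ k ∈ Finset.range m, X ^ ((k + 1) * m) * (X ^ (k + 1) - 1) with hf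
  have h0 : aeval ω f = 0 := by
    simp only [hf, map_sub, map_sum, map_mul, map_prod, map_pow, aeval_X, map_one, h, aeval_C]
    simp
  have h1 : cyclotomic p ℤ ∣ f := by
    rw [cyclotomic_eq_minpoly hω (by omega)]
    exact minpoly.isIntegrallyClosed_dvd (hω.isIntegral (by omega)) h0
  have h2 : cyclotomic p (ZMod p) = (X - 1) ^ (p - 1) := by
    have := cyclotomic_mul_prime_pow_eq (ZMod p) (p := p) (m := 1)
      (by simpa using (by omega : p ≠ 1)) one_pos
    simpa using this
  have h3 : (X : (ZMod p)[X]) ^ (p - 1) ∣ (f.map (Int.castRingHom (ZMod p))).comp (X + 1) := by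
    have h4 := Polynomial.map_dvd (Int.castRingHom (ZMod p)) h1
    rw [map_cyclotomic, h2] at h4
    obtain ⟨q, hq⟩ := h4
    rw [hq]
    exact ⟨q.comp (X + 1), by simp⟩
  have h4 := (X_pow_dvd_iff.mp h3) m (by omega)
  have h5 : (f.map (Int.castRingHom (ZMod p))).comp (X + 1)
      = ∑ j ∈ Finset.range p, (X + 1 : (ZMod p)[X]) ^ (a * j ^ 2)
      - C (e : ZMod p) * ∏ k ∈ Finset.range m,
          (X + 1 : (ZMod p)[X]) ^ ((k + 1) * m) * ((X + 1) ^ (k + 1) - 1) := by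
    simp [hf, Polynomial.map_sum, Polynomial.map_prod, Polynomial.prod_comp]
  rw [h5, coeff_sub, coeff_C_mul, coeff_prod_mod] at h4
  have h6 := coeff_gauss_mod p m hpm a
  have h7 := half_factorial_sq p m hpm
  have h8 : ((-1 : ZMod p) ^ m) * (-1) ^ m = 1 := by rw [← mul_pow]; simp
  rw [pow_succ] at h7
  linear_combination (-(e : ZMod p)) * h8 + (-1) ^ m * ((m.factorial : ZMod p) * h4 - h6
    ) + (-1) ^ m * e * h7

/-- The product of sines is `± √p` or `± i √p`, with the sign read off from the positivity of the
sines. -/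
lemma sineProd_eval (p m : ℕ) (hpm : p = 2 * m + 1) (ω : ℂ)
    (hω : ω = Complex.exp (2 * Real.pi * Complex.I / p)) :
    ∏ k ∈ Finset.range m, ω ^ ((k + 1) * m) * (ω ^ (k + 1) - 1)
      = (-1) ^ m * epsd p * (Real.sqrt p : ℂ) := by
  have hpos : (0 : ℝ) < p := by rw [hpm]; positivity
  have hp0 : (p : ℂ) ≠ 0 := by exact_mod_cast hpos.ne'
  have hprim : IsPrimitiveRoot ω p := by
    rw [hω]; exact Complex.isPrimitiveRoot_exp p (by omega)
  set P := ∏ k ∈ Finset.range m, ω ^ ((k + 1) * m) * (ω ^ (k + 1) - 1) with hP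
  set R : ℝ := ∏ k ∈ Finset.range m, 2 * Real.sin (Real.pi * (k + 1) / p) with hR
  have hR0 : 0 < R := by
    refine Finset.prod_pos fun k hk => ?_
    have hk' := Finset.mem_range.mp hk
    refine mul_pos two_pos (Real.sin_pos_of_pos_of_lt_pi (by positivity) ?_)
    rw [div_lt_iff₀ hpos]
    have : (k : ℝ) + 1 < p := by rw [hpm]; exact_mod_cast (by omega : k + 1 < 2 * m + 1)
    exact mul_lt_mul_of_pos_left this Real.pi_pos
  have hterm : ∀ k : ℕ, ω ^ ((k + 1) * m) * (ω ^ (k + 1) - 1)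
      = (-1) ^ (k + 1) * Complex.I * ((2 * Real.sin (Real.pi * (k + 1) / p) : ℝ) : ℂ) := by
    intro k
    set x : ℂ := Real.pi * (k + 1) / p with hx
    have e1 : ω ^ (k + 1) = Complex.exp (x * Complex.I) ^ 2 := by
      rw [hω, ← Complex.exp_nat_mul, ← Complex.exp_nat_mul]; congr 1
      rw [hx]; push_cast; field_simp
    have e2 : ω ^ ((k + 1) * m) = (-1) ^ (k + 1) * Complex.exp (-(x * Complex.I)) := by
      rw [← Complex.exp_pi_mul_I, hω, ← Complex.exp_nat_mul, ← Complex.exp_nat_mul,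
        ← Complex.exp_add]; congr 1
      rw [hx]
      have : (p : ℂ) = 2 * m + 1 := by exact_mod_cast hpm
      field_simp; push_cast; rw [this]; ring
    have e3 : Complex.exp (-(x * Complex.I)) * Complex.exp (x * Complex.I) = 1 := by
      rw [← Complex.exp_add]; simp
    rw [e1, e2]
    push_cast
    rw [← hx, Complex.sin, neg_mul]
    linear_combination (-1) ^ (k + 1) * Complex.exp (x * Complex.I) * e3
      - (-1) ^ (k + 1) * (Complex.exp (-(x * Complex.I)) - Complex.exp (x * Complex.I))
        * Complex.I_sq
  have hsign : ∀ n : ℕ, ∏ k ∈ Finset.range n, ((-1 : ℂ) ^ (k + 1) * Complex.I)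
      = if n % 4 = 0 then 1 else if n % 4 = 1 then -Complex.I else if n % 4 = 2 then 1
        else -Complex.I := by
    intro n
    induction n with
    | zero => simp
    | succ n ih =>
      rw [Finset.prod_range_succ, ih]
      have hpar : (-1 : ℂ) ^ (n + 1) = if n % 2 = 0 then -1 else 1 := by
        rcases Nat.even_or_odd n with h | h
        · rw [if_pos (Nat.even_iff.mp h), (Even.add_one h).neg_one_pow]
        · rw [if_neg (by have := Nat.odd_iff.mp h; omega), (Odd.add_one h).neg_one_pow]
      have h4 : n % 4 < 4 := Nat.mod_lt _ (by norm_num)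
      rw [hpar, Nat.add_mod, ← Nat.mod_mod_of_dvd n (by norm_num : 2 ∣ 4)]
      interval_cases n % 4 <;> simp
  have hPR : P = ((-1) ^ m * epsd p) * (R : ℂ) := by
    rw [hP, Finset.prod_congr rfl (fun k _ => hterm k), Finset.prod_mul_distrib, hsign, hR]
    push_cast
    congr 1
    have hpar : (-1 : ℂ) ^ m = if m % 2 = 0 then 1 else -1 := by
      rcases Nat.even_or_odd m with h | h
      · rw [if_pos (Nat.even_iff.mp h), h.neg_one_pow]
      · rw [if_neg (by have := Nat.odd_iff.mp h; omega), h.neg_one_pow]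
    have h4 : m % 4 < 4 := Nat.mod_lt _ (by norm_num)
    have h5 : p % 4 = (2 * (m % 4) + 1) % 4 := by omega
    rw [hpar, epsd, h5, ← Nat.mod_mod_of_dvd m (by norm_num : 2 ∣ 4)]
    interval_cases m % 4 <;> simp
  have hsq : (R : ℂ) ^ 2 = p := by
    have h1 := sineProd_sq m ω (hpm ▸ hprim)
    rw [← hP, hPR, ← hpm, mul_pow, mul_pow] at h1
    have h2 : epsd p ^ 2 = (-1) ^ m := by
      unfold epsd
      split_ifs with h
      · rw [Even.neg_one_pow (Nat.even_iff.mpr (by omega))]; simp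
      · rw [Odd.neg_one_pow (Nat.odd_iff.mpr (by omega))]; simp
    have h3 : ((-1 : ℂ) ^ m) * (-1) ^ m = 1 := by rw [← mul_pow]; simp
    rw [h2] at h1
    linear_combination (-1) ^ m * h1 + ((p : ℂ) - (R : ℂ) ^ 2 * ((-1) ^ m * (-1) ^ m + 1)) * h3
  have hR' : R = Real.sqrt p := by
    rw [eq_comm, Real.sqrt_eq_iff_mul_self_eq hpos.le hR0.le]
    rw [← sq]; exact_mod_cast hsq.symm
  rw [hPR, hR']

/-- Gauss's evaluation of the quadratic Gauss sum, sign included. -/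
lemma gauss_eval (p : ℕ) (hp : p.Prime) (hp3 : 3 ≤ p) (ω : ℂ)
    (hω : ω = Complex.exp (2 * Real.pi * Complex.I / p)) (a : ℕ) (ha : ¬ p ∣ a) :
    ∑ j ∈ Finset.range p, ω ^ (a * j ^ 2) = legSym p a * epsd p * (Real.sqrt p : ℂ) := by
  have : Fact p.Prime := ⟨hp⟩
  obtain ⟨m, hpm⟩ : ∃ m, p = 2 * m + 1 := hp.odd_of_ne_two (by omega)
  have hprim : IsPrimitiveRoot ω p := by
    rw [hω]; exact Complex.isPrimitiveRoot_exp p (by omega)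
  have ha0 : (a : ZMod p) ≠ 0 := by rwa [Ne, ZMod.natCast_eq_zero_iff]
  have hleg : ((legSym p a : ℤ) : ZMod p) = (a : ZMod p) ^ m ∧
      (legSym p a = 1 ∨ legSym p a = -1) := by
    have hE := ZMod.euler_criterion p ha0
    have hD := ZMod.pow_div_two_eq_neg_one_or_one p ha0
    rw [show p / 2 = m by omega] at hE hD
    unfold legSym
    simp only [Int.cast_natCast, if_neg ha0]
    split_ifs with hs
    · exact ⟨by rw [hE.mp hs]; simp, Or.inl rfl⟩
    · exact ⟨by rw [hD.resolve_left (fun h => hs (hE.mpr h))]; simp, Or.inr rfl⟩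
  set P := ∏ k ∈ Finset.range m, ω ^ ((k + 1) * m) * (ω ^ (k + 1) - 1) with hP
  have hsq : (∑ j ∈ Finset.range p, ω ^ (a * j ^ 2)) ^ 2 = P ^ 2 := by
    have h1 := quadGauss_sq p (by omega) (ω ^ a)
      (hprim.pow_of_coprime a ((hp.coprime_iff_not_dvd.mpr ha).symm))
    have h2 := sineProd_sq m ω (hpm ▸ hprim)
    simp only [← pow_mul] at h1
    rw [h1, hP, h2, show p / 2 = m by omega, ← hpm]
  have hP' := sineProd_eval p m hpm ω hω
  obtain ⟨e, he, hGe⟩ : ∃ e : ℤ, (e = 1 ∨ e = -1) ∧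
      ∑ j ∈ Finset.range p, ω ^ (a * j ^ 2) = e * P := by
    rcases sq_eq_sq_iff_eq_or_eq_neg.mp hsq with h | h
    · exact ⟨1, Or.inl rfl, by simp [h]⟩
    · exact ⟨-1, Or.inr rfl, by simp [h]⟩
  have hmod := gauss_sign_mod p m hpm ω hprim a e hGe
  have hsg : (-1 : ℤ) ^ m = 1 ∨ (-1 : ℤ) ^ m = -1 := neg_one_pow_eq_or ℤ m
  have heq : e = (-1) ^ m * legSym p a := by
    have h1 : ((e - (-1) ^ m * legSym p a : ℤ) : ZMod p) = 0 := by
      push_cast; rw [hleg.1, hmod]; ring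
    rw [ZMod.intCast_zmod_eq_zero_iff_dvd] at h1
    -- both sides are `±1`, and `p > 2` divides their difference
    have h2 := Int.eq_zero_of_abs_lt_dvd h1 (by
      rcases he with h | h <;> rcases hsg with h' | h' <;> rcases hleg.2 with h'' | h'' <;>
        rw [h, h', h''] <;> norm_num <;> omega)
    linarith
  have h3 : ((-1 : ℂ) ^ m) * (-1) ^ m = 1 := by rw [← mul_pow]; simp
  rw [hGe, hP, hP', heq]
  push_cast
  linear_combination (legSym p a * epsd p * (Real.sqrt p : ℂ)) * h3

/-! ### The upper bound -/

/-- `∑_a z_a F_a` is a contraction for unimodular `z`: the defect `1 - A Aᴴ` is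
`∑_a (z_a - A) F_a (z_a - A)ᴴ`. -/
lemma posSemidef_one_sub_mul_conjTranspose {d D : ℕ} (F : Fin d → Matrix (Fin D) (Fin D) ℂ)
    (hF : ∀ a, (F a).PosSemidef) (hF1 : ∑ a, F a = 1) (z : Fin d → ℂ)
    (hz : ∀ a, z a * star (z a) = 1) :
    (1 - (∑ a, z a • F a) * (∑ a, z a • F a)ᴴ).PosSemidef := by
  set A := ∑ a, z a • F a with hA
  have hAH : Aᴴ = ∑ a, star (z a) • F a := by
    rw [hA, conjTranspose_sum]
    exact Finset.sum_congr rfl fun a _ => by rw [conjTranspose_smul, (hF a).isHermitian.eq]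
  have key : 1 - A * Aᴴ = ∑ a, (z a • (1 : Matrix (Fin D) (Fin D) ℂ) - A) * F a
      * (z a • (1 : Matrix (Fin D) (Fin D) ℂ) - A)ᴴ := by
    have e : ∀ a, (z a • (1 : Matrix (Fin D) (Fin D) ℂ) - A) * F a
        * (z a • (1 : Matrix (Fin D) (Fin D) ℂ) - A)ᴴ
        = F a - (z a • F a) * Aᴴ - A * (star (z a) • F a) + A * F a * Aᴴ := by
      intro a
      rw [conjTranspose_sub, conjTranspose_smul, conjTranspose_one]
      simp only [sub_mul, mul_sub, smul_mul_assoc, mul_smul_comm, one_mul, mul_one]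
      rw [smul_sub, smul_smul, mul_comm (star (z a)), hz a, one_smul]
      abel
    rw [Finset.sum_congr rfl (fun a _ => e a), Finset.sum_add_distrib, Finset.sum_sub_distrib,
      Finset.sum_sub_distrib, hF1, ← Finset.sum_mul, ← Finset.mul_sum, ← Finset.sum_mul,
      ← Finset.mul_sum, hF1, ← hAH, ← hA]
    simp
  rw [key]
  exact posSemidef_sum _ fun a _ => (hF a).mul_mul_conjTranspose_same _

open scoped MatrixOrder in
lemma trace_mul_nonneg_of_posSemidef {n : Type*} [Fintype n] [DecidableEq n] {M ρ : Matrix n n ℂ}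
    (hM : M.PosSemidef) (hρ : ρ.PosSemidef) : 0 ≤ (M * ρ).trace.re := by
  obtain ⟨X, rfl⟩ := CStarAlgebra.nonneg_iff_eq_star_mul_self.mp hM.nonneg
  rw [star_eq_conjTranspose, mul_assoc, trace_mul_comm]
  exact (Complex.le_def.mp (hρ.mul_mul_conjTranspose_same X).trace_nonneg).1

/-- The sum-of-squares inequality `2 Re ⟨C ⊗ B⟩ ≤ ⟨C Cᴴ ⊗ 1⟩ + ⟨1 ⊗ Bᴴ B⟩`, from the square of
`Cᴴ ⊗ 1 - 1 ⊗ B`. -/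
lemma two_re_trace_kronecker_le {DA DB : ℕ} (C : Matrix (Fin DA) (Fin DA) ℂ)
    (B : Matrix (Fin DB) (Fin DB) ℂ) (ρ : Matrix (Fin DA × Fin DB) (Fin DA × Fin DB) ℂ)
    (hρ : ρ.PosSemidef) :
    2 * (((C ⊗ₖ B) * ρ).trace).re ≤ ((((C * Cᴴ) ⊗ₖ (1 : Matrix (Fin DB) (Fin DB) ℂ)) * ρ).trace).re
      + ((((1 : Matrix (Fin DA) (Fin DA) ℂ) ⊗ₖ (Bᴴ * B)) * ρ).trace).re := by
  set X := Cᴴ ⊗ₖ (1 : Matrix (Fin DB) (Fin DB) ℂ) - (1 : Matrix (Fin DA) (Fin DA) ℂ) ⊗ₖ B with hX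
  have h1 : Xᴴ * X = (C * Cᴴ) ⊗ₖ (1 : Matrix (Fin DB) (Fin DB) ℂ) - C ⊗ₖ B - (C ⊗ₖ B)ᴴ
      + (1 : Matrix (Fin DA) (Fin DA) ℂ) ⊗ₖ (Bᴴ * B) := by
    rw [hX, conjTranspose_sub]
    simp only [conjTranspose_kronecker, conjTranspose_conjTranspose, conjTranspose_one, sub_mul,
      mul_sub, ← mul_kronecker_mul, one_mul, mul_one]
    abel
  have h2 := trace_mul_nonneg_of_posSemidef (posSemidef_conjTranspose_mul_self X) hρ
  have h3 : (((C ⊗ₖ B)ᴴ * ρ).trace).re = (((C ⊗ₖ B) * ρ).trace).re := by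
    have : (C ⊗ₖ B)ᴴ * ρ = (ρ * (C ⊗ₖ B))ᴴ := by
      rw [conjTranspose_mul, hρ.isHermitian.eq]
    rw [this, trace_conjTranspose, trace_mul_comm]
    simp
  rw [h1] at h2
  simp only [add_mul, sub_mul, trace_add, trace_sub, Complex.add_re, Complex.sub_re, h3] at h2
  linarith

lemma re_trace_kronecker_one_le {DA DB : ℕ} (M : Matrix (Fin DA) (Fin DA) ℂ)
    (hM : (1 - M).PosSemidef) (ρ : Matrix (Fin DA × Fin DB) (Fin DA × Fin DB) ℂ)
    (hρ : ρ.PosSemidef) (hρ1 : ρ.trace = 1) :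
    (((M ⊗ₖ (1 : Matrix (Fin DB) (Fin DB) ℂ)) * ρ).trace).re ≤ 1 := by
  have h := trace_mul_nonneg_of_posSemidef
    (hM.kronecker (PosSemidef.one (n := Fin DB) (R := ℂ))) hρ
  have e : (1 - M) ⊗ₖ (1 : Matrix (Fin DB) (Fin DB) ℂ)
      = 1 - M ⊗ₖ (1 : Matrix (Fin DB) (Fin DB) ℂ) := by
    rw [sub_eq_add_neg, add_kronecker, one_kronecker_one, ← neg_one_smul ℂ M, smul_kronecker,
      neg_one_smul, ← sub_eq_add_neg]
  rw [e, sub_mul, one_mul, trace_sub, hρ1] at h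
  simpa using h

lemma re_trace_one_kronecker_le {DA DB : ℕ} (M : Matrix (Fin DB) (Fin DB) ℂ)
    (hM : (1 - M).PosSemidef) (ρ : Matrix (Fin DA × Fin DB) (Fin DA × Fin DB) ℂ)
    (hρ : ρ.PosSemidef) (hρ1 : ρ.trace = 1) :
    ((((1 : Matrix (Fin DA) (Fin DA) ℂ) ⊗ₖ M) * ρ).trace).re ≤ 1 := by
  have h := trace_mul_nonneg_of_posSemidef
    ((PosSemidef.one (n := Fin DA) (R := ℂ)).kronecker hM) hρ
  have e : (1 : Matrix (Fin DA) (Fin DA) ℂ) ⊗ₖ (1 - M)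
      = 1 - (1 : Matrix (Fin DA) (Fin DA) ℂ) ⊗ₖ M := by
    rw [sub_eq_add_neg, kronecker_add, one_kronecker_one, ← neg_one_smul ℂ M, kronecker_smul,
      neg_one_smul, ← sub_eq_add_neg]
  rw [e, sub_mul, one_mul, trace_sub, hρ1] at h
  simpa using h

lemma sum_kronecker_right {ι : Type*} (s : Finset ι) {DA DB : ℕ}
    (M : ι → Matrix (Fin DA) (Fin DA) ℂ) (N : Matrix (Fin DB) (Fin DB) ℂ) :
    (∑ i ∈ s, M i) ⊗ₖ N = ∑ i ∈ s, M i ⊗ₖ N := by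
  ext ⟨a, b⟩ ⟨a', b'⟩
  simp [Matrix.sum_apply, kroneckerMap_apply, Finset.sum_mul]

/-- The bound for one Fourier mode: for a matrix `w` with orthogonal rows (of squared norm `d`), the
Bell term is `√d ∑_k ⟨C_k ⊗ B_k⟩` with `∑_k C_k C_kᴴ = ∑_j A_j A_jᴴ ≤ d`. -/
lemma re_trace_mode_le {d DA DB : ℕ} (hd : 0 < d) (A : Fin d → Matrix (Fin DA) (Fin DA) ℂ)
    (B : Fin d → Matrix (Fin DB) (Fin DB) ℂ)
    (hA : ∀ j, (1 - A j * (A j)ᴴ).PosSemidef) (hB : ∀ k, (1 - (B k)ᴴ * B k).PosSemidef)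
    (ρ : Matrix (Fin DA × Fin DB) (Fin DA × Fin DB) ℂ)
    (hρ : ρ.PosSemidef) (hρ1 : ρ.trace = 1) (l : ℂ) (hl : l * star l = 1)
    (w : Fin d → Fin d → ℂ)
    (hw : ∀ j j', ∑ k, w j k * star (w j' k) = if j = j' then (d : ℂ) else 0) :
    (((l • ∑ j, ∑ k, w j k • (A j ⊗ₖ B k)) * ρ).trace).re ≤ d * Real.sqrt d := by
  have hd0 : (0 : ℝ) < d := by exact_mod_cast hd
  set s : ℝ := Real.sqrt d with hs
  have hs0 : 0 < s := Real.sqrt_pos.mpr hd0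
  have hss : (s : ℂ) * s = d := by rw [← Complex.ofReal_mul, hs, Real.mul_self_sqrt hd0.le]; simp
  have hsc : (s : ℂ) ≠ 0 := by exact_mod_cast hs0.ne'
  have hdc : (d : ℂ) ≠ 0 := by exact_mod_cast hd0.ne'
  set C : Fin d → Matrix (Fin DA) (Fin DA) ℂ := fun k => (l * (s : ℂ)⁻¹) • ∑ j, w j k • A j with hC
  have hCC : ∑ k, C k * (C k)ᴴ = ∑ j, A j * (A j)ᴴ := by
    have e : ∀ k, C k * (C k)ᴴ
        = ∑ j, ∑ j', ((d : ℂ)⁻¹ * (w j k * star (w j' k))) • (A j * (A j')ᴴ) := by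
      intro k
      simp only [hC, conjTranspose_smul, conjTranspose_sum, smul_mul_assoc, mul_smul_comm,
        Finset.sum_mul, Finset.mul_sum, smul_smul]
      rw [Finset.sum_comm, Finset.smul_sum]
      refine Finset.sum_congr rfl fun j' _ => ?_
      simp only [Finset.smul_sum, smul_smul]
      refine Finset.sum_congr rfl fun j _ => ?_
      congr 1
      have h2 : star (l * (s : ℂ)⁻¹) = star l * (s : ℂ)⁻¹ := by simp
      rw [h2, ← hss, mul_inv]
      linear_combination ((s : ℂ)⁻¹ * (s : ℂ)⁻¹ * (w j k * star (w j' k))) * hl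
    rw [Finset.sum_congr rfl (fun k _ => e k), Finset.sum_comm]
    refine Finset.sum_congr rfl fun j _ => ?_
    rw [Finset.sum_comm]
    simp only [← Finset.sum_smul, ← Finset.mul_sum, hw]
    rw [Finset.sum_eq_single j]
    · simp [hdc]
    · intro b _ hb; simp [hb.symm]
    · simp
  have hW : l • ∑ j, ∑ k, w j k • (A j ⊗ₖ B k) = (s : ℂ) • ∑ k, C k ⊗ₖ B k := by
    simp only [hC, smul_kronecker, sum_kronecker_right]
    rw [← Finset.smul_sum, smul_smul, Finset.sum_comm]
    congr 1
    field_simp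
  have h1 : ∀ k, 2 * (((C k ⊗ₖ B k) * ρ).trace).re
      ≤ ((((C k * (C k)ᴴ) ⊗ₖ (1 : Matrix (Fin DB) (Fin DB) ℂ)) * ρ).trace).re + 1 := fun k =>
    (two_re_trace_kronecker_le (C k) (B k) ρ hρ).trans
      (add_le_add le_rfl (re_trace_one_kronecker_le _ (hB k) ρ hρ hρ1))
  have h2 := Finset.sum_le_sum fun k (_ : k ∈ Finset.univ) => h1 k
  have h3 : ∑ k, ((((C k * (C k)ᴴ) ⊗ₖ (1 : Matrix (Fin DB) (Fin DB) ℂ)) * ρ).trace).re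
      ≤ d := by
    rw [← Complex.re_sum, ← trace_sum, ← Finset.sum_mul, ← sum_kronecker_right, hCC,
      sum_kronecker_right, Finset.sum_mul, trace_sum, Complex.re_sum]
    calc _ ≤ ∑ j : Fin d, (1 : ℝ) :=
          Finset.sum_le_sum fun j _ => re_trace_kronecker_one_le _ (hA j) ρ hρ hρ1
      _ = d := by simp
  rw [← Finset.mul_sum, Finset.sum_add_distrib] at h2
  have h4 : ∑ k, (((C k ⊗ₖ B k) * ρ).trace).re ≤ d := by
    simp only [Finset.sum_const, Finset.card_univ, Fintype.card_fin, nsmul_eq_mul, mul_one] at h2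
    linarith
  rw [hW, smul_mul_assoc, trace_smul, Finset.sum_mul, trace_sum, smul_eq_mul, Complex.re_ofReal_mul,
    Complex.re_sum, mul_comm (d : ℝ)]
  exact mul_le_mul_of_nonneg_left h4 hs0.le

/-! ### Orthogonality of characters -/

lemma IsPrimitiveRoot.mul_star_self {d : ℕ} (hd : d ≠ 0) {ζ : ℂ} (hζ : IsPrimitiveRoot ζ d) :
    ζ * star ζ = 1 := by
  have h : ‖ζ‖ = 1 := hζ.norm'_eq_one hd
  rw [Complex.star_def, Complex.mul_conj, Complex.normSq_eq_norm_sq, h]; simp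

lemma sum_root_orthogonal {d : ℕ} (hd : d ≠ 0) {ζ : ℂ} (hζ : IsPrimitiveRoot ζ d) (j j' : ℕ) :
    ∑ k : Fin d, ζ ^ (j * (k : ℕ)) * star (ζ ^ (j' * (k : ℕ)))
      = if j ≡ j' [MOD d] then (d : ℂ) else 0 := by
  have hu := hζ.mul_star_self hd
  have hpow : ∀ n : ℕ, ζ ^ n * star (ζ ^ n) = 1 := fun n => by
    rw [star_pow, ← mul_pow, hu, one_pow]
  have e : ∀ k : Fin d, ζ ^ (j * (k : ℕ)) * star (ζ ^ (j' * (k : ℕ)))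
      = (ζ ^ j * star (ζ ^ j')) ^ (k : ℕ) := by
    intro k; rw [mul_pow, ← star_pow, ← pow_mul, ← pow_mul]
  rw [Finset.sum_congr rfl (fun k _ => e k), ← Finset.sum_range (fun k => (ζ ^ j * star (ζ ^ j')) ^ k)]
  split_ifs with h
  · have : ζ ^ j = ζ ^ j' := by
      rw [← pow_mod_orderOf, ← hζ.eq_orderOf, h, hζ.eq_orderOf, pow_mod_orderOf]
    rw [this, hpow]; simp
  · have hne : ζ ^ j * star (ζ ^ j') ≠ 1 := by
      intro h1
      apply h
      have h2 : ζ ^ j = ζ ^ j' := by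
        linear_combination ζ ^ j' * h1 - ζ ^ j * hpow j'
      refine hζ.pow_inj (Nat.mod_lt _ (Nat.pos_of_ne_zero hd)) (Nat.mod_lt _ (Nat.pos_of_ne_zero hd)) ?_
      rw [hζ.eq_orderOf, pow_mod_orderOf, pow_mod_orderOf, h2]
    rw [geom_sum_eq hne, mul_pow, ← star_pow, ← pow_mul, ← pow_mul, mul_comm j, mul_comm j',
      pow_mul, pow_mul, hζ.pow_eq_one]
    simp

/-! ### The optimal realisation -/

/-- The rank-one operators `|v_a⟩⟨v_a|` with `v_a(x) = d^{-1/2} ω^{-ax} t(x)`: for unimodular `t`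
this is a basis unbiased to the computational one, and its `n`-th Fourier transform is the
monomial matrix with entries `t(x) conj(t(y))` at `x ≡ y + n`. -/
def phasePOVM (d : ℕ) (ω : ℂ) (t : ℕ → ℂ) (a : Fin d) : Matrix (Fin d) (Fin d) ℂ :=
  (d : ℂ)⁻¹ • vecMulVec (fun x : Fin d => star (ω ^ ((x : ℕ) * (a : ℕ))) * t x)
    (star (fun x : Fin d => star (ω ^ ((x : ℕ) * (a : ℕ))) * t x))

lemma phasePOVM_posSemidef (d : ℕ) (ω : ℂ) (t : ℕ → ℂ) (a : Fin d) :
    (phasePOVM d ω t a).PosSemidef := by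
  refine (posSemidef_vecMulVec_self_star _).smul ?_
  rw [← Complex.ofReal_natCast, ← Complex.ofReal_inv]
  exact Complex.zero_le_real.mpr (by positivity)

lemma phasePOVM_fourier {d : ℕ} (hd : d ≠ 0) {ω : ℂ} (hω : IsPrimitiveRoot ω d) (t : ℕ → ℂ)
    (n : ℕ) (x y : Fin d) :
    (∑ a : Fin d, ω ^ ((a : ℕ) * n) • phasePOVM d ω t a) x y
      = if (y : ℕ) + n ≡ x [MOD d] then t x * star (t y) else 0 := by
  have hdc : (d : ℂ) ≠ 0 := by exact_mod_cast hd
  have e : ∀ a : Fin d, (ω ^ ((a : ℕ) * n) • phasePOVM d ω t a) x y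
      = (d : ℂ)⁻¹ * (t x * star (t y)) *
        (ω ^ (((y : ℕ) + n) * (a : ℕ)) * star (ω ^ ((x : ℕ) * (a : ℕ)))) := by
    intro a
    simp only [phasePOVM, Matrix.smul_apply, vecMulVec_apply, Pi.star_apply, star_mul', star_star,
      smul_eq_mul]
    rw [add_mul, pow_add, mul_comm (a : ℕ) n]
    ring
  rw [Matrix.sum_apply, Finset.sum_congr rfl (fun a _ => e a), ← Finset.mul_sum,
    sum_root_orthogonal hd hω]
  split_ifs
  · field_simp
  · simp

lemma phasePOVM_sum {d : ℕ} (hd : d ≠ 0) {ω : ℂ} (hω : IsPrimitiveRoot ω d) (t : ℕ → ℂ)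
    (ht : ∀ x, t x * star (t x) = 1) : ∑ a : Fin d, phasePOVM d ω t a = 1 := by
  ext x y
  have h := phasePOVM_fourier hd hω t 0 x y
  simp only [mul_zero, pow_zero, one_smul, add_zero] at h
  rw [h, Matrix.one_apply]
  by_cases hxy : x = y
  · subst hxy; rw [if_pos rfl, if_pos (Nat.ModEq.refl _), ht]
  · rw [if_neg hxy, if_neg]
    intro hm
    exact hxy (Fin.ext (Nat.ModEq.eq_of_lt_of_lt hm.symm x.2 y.2))

/-- The maximally entangled state on `ℂ^d ⊗ ℂ^d`. -/
def maxEnt (d : ℕ) : Matrix (Fin d × Fin d) (Fin d × Fin d) ℂ :=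
  (d : ℂ)⁻¹ • vecMulVec (fun z => if z.1 = z.2 then 1 else 0)
    (star (fun z => if z.1 = z.2 then 1 else 0))

lemma maxEnt_posSemidef (d : ℕ) : (maxEnt d).PosSemidef := by
  refine (posSemidef_vecMulVec_self_star _).smul ?_
  rw [← Complex.ofReal_natCast, ← Complex.ofReal_inv]
  exact Complex.zero_le_real.mpr (by positivity)

lemma trace_kronecker_maxEnt (d : ℕ) (A B : Matrix (Fin d) (Fin d) ℂ) :
    ((A ⊗ₖ B) * maxEnt d).trace = (d : ℂ)⁻¹ * ∑ x, ∑ y, A x y * B x y := by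
  simp only [maxEnt, mul_smul_comm, trace_smul, smul_eq_mul]
  congr 1
  simp only [Matrix.trace, Matrix.diag, Matrix.mul_apply, vecMulVec_apply, Fintype.sum_prod_type,
    kroneckerMap_apply, Pi.star_apply]
  refine Finset.sum_congr rfl fun x _ => ?_
  rw [Finset.sum_eq_single x]
  · refine Finset.sum_congr rfl fun y _ => ?_
    rw [Finset.sum_eq_single y]
    · simp
    · intro b _ hb; simp [hb.symm]
    · simp
  · intro b _ hb; simp [hb.symm]
  · simp

lemma maxEnt_trace (d : ℕ) (hd : d ≠ 0) : (maxEnt d).trace = 1 := by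
  have hdc : (d : ℂ) ≠ 0 := by exact_mod_cast hd
  have h := trace_kronecker_maxEnt d 1 1
  rw [one_kronecker_one, one_mul] at h
  rw [h]
  simp [Matrix.one_apply, hdc]

/-! ### Arithmetic modulo `48 d` -/

/-- Divisibility by `12` of integer polynomial values is checked on residues modulo `3` and `4`. -/
lemma dvd_of_dvd_three_four {a : ℤ} (h3 : ((a : ℤ) : ZMod 3) = 0) (h4 : ((a : ℤ) : ZMod 4) = 0) :
    (12 : ℤ) ∣ a := by
  rw [ZMod.intCast_zmod_eq_zero_iff_dvd] at h3 h4
  omega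

/-- The exponent of Bob's phases, to be divided by `48 d`. The coefficient `3 d + 4` of the cubic
term makes it periodic in `v` modulo `d` (up to multiples of `48 d`) while keeping the increments
of `bobExp_increment`. -/
def bobExp (d v : ℤ) : ℤ := (d ^ 2 - 1) * ((3 * d + 4) * v ^ 3 + 3 * v)

lemma bobExp_periodic (h v q : ℤ) :
    48 * (2 * h - 1) ∣ bobExp (2 * h - 1) (v + (2 * h - 1) * q) - bobExp (2 * h - 1) v := by
  have h1 : (12 : ℤ) ∣ h * (h - 1) * q * ((6 * h + 1) *
      (3 * v ^ 2 + 3 * v * (2 * h - 1) * q + (2 * h - 1) ^ 2 * q ^ 2) + 3) := by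
    apply dvd_of_dvd_three_four
    · push_cast
      generalize (h : ZMod 3) = h'; generalize (q : ZMod 3) = q'; generalize (v : ZMod 3) = v'
      revert h' q' v'; decide
    · push_cast
      generalize (h : ZMod 4) = h'; generalize (q : ZMod 4) = q'; generalize (v : ZMod 4) = v'
      revert h' q' v'; decide
  obtain ⟨c, hc⟩ := h1
  refine ⟨c, ?_⟩
  unfold bobExp
  linear_combination (4 * (2 * h - 1)) * hc

/-- The canonical phases in terms of a cubic polynomial: the case distinctions in `gph` only serve
to make this congruence modulo `48 d` hold. -/
lemma gph_congr (h n d : ℕ) (hd : d + 1 = 2 * h) :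
    48 * (d : ℤ) ∣ gph n d + ((d : ℤ) ^ 2 - 1) * ((n : ℤ) ^ 3 + 3 * n) := by
  have hdz : (d : ℤ) = 2 * h - 1 := by push_cast [← Nat.cast_inj (R := ℤ)] at hd; linarith
  unfold gph
  split_ifs with h1 h2 h2
  · obtain ⟨r, rfl⟩ : ∃ r, n = 2 * r := ⟨n / 2, by omega⟩
    obtain ⟨s, hs⟩ : ∃ s, r + h = 2 * s := ⟨(r + h) / 2, by omega⟩
    have hs' : (r : ℤ) = 2 * s - h := by push_cast [← Nat.cast_inj (R := ℤ)] at hs; linarith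
    have h3 : (12 : ℤ) ∣ (r : ℤ) * (2 * d * r ^ 2 + d - 3) := by
      rw [hdz, hs']
      generalize (h : ℤ) = h''; generalize (s : ℤ) = s''
      apply dvd_of_dvd_three_four
      · push_cast
        generalize (h'' : ZMod 3) = h'; generalize (s'' : ZMod 3) = s'
        revert h' s'; decide
      · push_cast
        generalize (h'' : ZMod 4) = h'; generalize (s'' : ZMod 4) = s'
        revert h' s'; decide
    obtain ⟨c, hc⟩ := h3
    refine ⟨c, ?_⟩
    push_cast
    linear_combination (4 * (d : ℤ)) * hc
  · obtain ⟨r, rfl⟩ : ∃ r, n = 2 * r := ⟨n / 2, by omega⟩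
    obtain ⟨s, hs⟩ : ∃ s, r + h = 2 * s + 1 := ⟨(r + h) / 2, by omega⟩
    have hs' : (r : ℤ) = 2 * s + 1 - h := by
      push_cast [← Nat.cast_inj (R := ℤ)] at hs; linarith
    have h3 : (12 : ℤ) ∣ (r : ℤ) * (2 * d * r ^ 2 + d + 3) := by
      rw [hdz, hs']
      generalize (h : ℤ) = h''; generalize (s : ℤ) = s''
      apply dvd_of_dvd_three_four
      · push_cast
        generalize (h'' : ZMod 3) = h'; generalize (s'' : ZMod 3) = s'
        revert h' s'; decide
      · push_cast
        generalize (h'' : ZMod 4) = h'; generalize (s'' : ZMod 4) = s'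
        revert h' s'; decide
    obtain ⟨c, hc⟩ := h3
    refine ⟨c, ?_⟩
    push_cast
    linear_combination (4 * (d : ℤ)) * hc
  · obtain ⟨r, rfl⟩ : ∃ r, n = 4 * r + 1 := ⟨n / 4, by omega⟩
    have h3 : (12 : ℤ) ∣ 4 * ((r : ℤ) * (r + 1) * (4 * r - 1)) := by
      generalize (r : ℤ) = r''
      apply dvd_of_dvd_three_four
      · push_cast
        generalize (r'' : ZMod 3) = r'
        revert r'; decide
      · push_cast
        generalize (r'' : ZMod 4) = r'
        revert r'; decide
    obtain ⟨c, hc⟩ := h3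
    refine ⟨c * d, ?_⟩
    push_cast
    linear_combination (4 * (d : ℤ) ^ 2) * hc
  · obtain ⟨r, rfl⟩ : ∃ r, n = 4 * r + 3 := ⟨n / 4, by omega⟩
    have h3 : (12 : ℤ) ∣ 4 * (((r : ℤ) + 1) * (4 * r ^ 2 + 5 * r + 3)) := by
      generalize (r : ℤ) = r''
      apply dvd_of_dvd_three_four
      · push_cast
        generalize (r'' : ZMod 3) = r'
        revert r'; decide
      · push_cast
        generalize (r'' : ZMod 4) = r'
        revert r'; decide
    obtain ⟨c, hc⟩ := h3
    refine ⟨c * d, ?_⟩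
    push_cast
    linear_combination (4 * (d : ℤ) ^ 2) * hc

/-- The increments of `bobExp` are the exponents left over after completing the square in Alice's
Gauss sums; `h` is the inverse of `2` modulo `d = 2 h - 1`. -/
lemma bobExp_increment (h v n : ℤ) :
    48 * (2 * h - 1) ∣ ((2 * h - 1) ^ 2 - 1) * (n ^ 3 + 3 * n) - 48 * (n * (h * (v + h * n)) ^ 2)
      - (bobExp (2 * h - 1) (v + n) - bobExp (2 * h - 1) v) := by
  have h1 : (4 : ℤ) ∣ h * n * (2 * h * (h + 1) * n ^ 2 + (7 * h + 1) * v * n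
      + (3 * h + 1) * v ^ 2) := by
    have : ((h * n * (2 * h * (h + 1) * n ^ 2 + (7 * h + 1) * v * n
      + (3 * h + 1) * v ^ 2) : ℤ) : ZMod 4) = 0 := by
      push_cast
      generalize (h : ZMod 4) = h'; generalize (n : ZMod 4) = q'; generalize (v : ZMod 4) = v'
      revert h' q' v'; decide
    exact (ZMod.intCast_zmod_eq_zero_iff_dvd _ 4).mp this
  obtain ⟨c, hc⟩ := h1
  refine ⟨-c, ?_⟩
  unfold bobExp
  linear_combination (-(12 * (2 * h - 1))) * hc

/-! ### The cubic phases -/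

/-- `exp(2πi x / (48 d))`: every phase of the problem is a `48 d`-th root of unity. -/
def ph (d : ℕ) (x : ℤ) : ℂ := Complex.exp (2 * Real.pi * Complex.I * x / (48 * d))

lemma ph_add (d : ℕ) (x y : ℤ) : ph d (x + y) = ph d x * ph d y := by
  unfold ph; rw [← Complex.exp_add]; congr 1; push_cast; ring

lemma ph_star (d : ℕ) (x : ℤ) : star (ph d x) = ph d (-x) := by
  unfold ph
  rw [Complex.star_def, ← Complex.exp_conj]
  congr 1
  simp [map_ofNat]

lemma ph_zero (d : ℕ) : ph d 0 = 1 := by simp [ph]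

lemma ph_mul_star (d : ℕ) (x : ℤ) : ph d x * star (ph d x) = 1 := by
  rw [ph_star, ← ph_add, add_neg_cancel, ph_zero]

lemma ph_congr {d : ℕ} (hd : d ≠ 0) {x y : ℤ} (h : 48 * (d : ℤ) ∣ x - y) : ph d x = ph d y := by
  obtain ⟨c, hc⟩ := h
  have hdc : (d : ℂ) ≠ 0 := by exact_mod_cast hd
  have e : x = y + 48 * d * c := by linarith
  have h1 : ph d (48 * d * c) = 1 := by
    unfold ph
    rw [Complex.exp_eq_one_iff]
    refine ⟨c, ?_⟩
    push_cast
    field_simp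
  rw [e, ph_add, h1, mul_one]

lemma root_pow_eq_ph {d : ℕ} (hd : d ≠ 0) (k : ℕ) :
    Complex.exp (2 * Real.pi * Complex.I / d) ^ k = ph d (48 * k) := by
  have hdc : (d : ℂ) ≠ 0 := by exact_mod_cast hd
  unfold ph
  rw [← Complex.exp_nat_mul]; congr 1; push_cast; field_simp

lemma sum_range_shift (d : ℕ) (f : ℕ → ℂ) (hf : ∀ x, f (x + d) = f x) (s : ℕ) :
    ∑ j ∈ Finset.range d, f (j + s) = ∑ j ∈ Finset.range d, f j := by
  induction s with
  | zero => simp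
  | succ s ih =>
    have h1 := Finset.sum_range_succ (fun j => f (j + s)) d
    have h2 := Finset.sum_range_succ' (fun j => f (j + s)) d
    rw [h1] at h2
    have h3 : f (d + s) = f (0 + s) := by rw [add_comm d s, hf, zero_add]
    rw [h3] at h2
    rw [← ih]
    have h4 := add_right_cancel h2
    rw [h4]
    exact Finset.sum_congr rfl fun j _ => by congr 1; ring

/-- Alice's phases `ω^(j² x + j x² / 2)`. Here `h` is the inverse of `2` modulo `d`. -/
def alicePhase (d h j : ℕ) (x : ℕ) : ℂ := ph d (48 * (j ^ 2 * x + j * h * x ^ 2))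

/-- The complex conjugates of Bob's phases. -/
def bobPhase (d k : ℕ) (x : ℕ) : ℂ := ph d (bobExp d (x + k))

/-- The canonical phase `λ_n` cancels the Gauss sum and turns the discrete Fourier transform of
Alice's phase differences into Bob's phase differences. -/
lemma fourier_alice_eq_bob (d h : ℕ) (hd : d.Prime) (hd3 : 3 ≤ d) (hh : d + 1 = 2 * h)
    (ω : ℂ) (hω : ω = Complex.exp (2 * Real.pi * Complex.I / d)) (l : ℂ) (n : ℕ) (hn1 : 1 ≤ n)
    (hnd : n ≤ d - 1)
    (hl : l = (epsd d)⁻¹ * ((legSym d n : ℂ))⁻¹ *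
        Complex.exp (-(Real.pi * Complex.I * (gph n d : ℂ)) / (24 * d)))
    (k x y : ℕ) (hxy : y + n ≡ x [MOD d]) :
    l * ∑ j : Fin d, ω ^ (n * (j : ℕ) * k) * (alicePhase d h j x * star (alicePhase d h j y))
      = (Real.sqrt d : ℂ) * (bobPhase d k x * star (bobPhase d k y)) := by
  have hd0 : d ≠ 0 := by omega
  have hdz : (d : ℤ) = 2 * h - 1 := by push_cast [← Nat.cast_inj (R := ℤ)] at hh; linarith
  have hndvd : ¬ d ∣ n := fun hdvd => by have := Nat.le_of_dvd hn1 hdvd; omega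
  obtain ⟨q, hq⟩ := (Nat.modEq_iff_dvd.mp hxy)
  have hx : (x : ℤ) = y + n + d * q := by push_cast at hq; linarith
  set s : ℕ := h * (k + y + h * n) with hs
  have hterm : ∀ j : ℕ, ω ^ (n * j * k) * (alicePhase d h j x * star (alicePhase d h j y))
      = ph d (-(48 * (n * s ^ 2))) * ω ^ (n * (j + s) ^ 2) := by
    intro j
    rw [hω, root_pow_eq_ph hd0, root_pow_eq_ph hd0, alicePhase, alicePhase, ph_star, ← ph_add,
      ← ph_add, ← ph_add]
    apply ph_congr hd0
    refine ⟨j ^ 2 * q + j * h * q * (2 * (y + n) + d * q)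
      - (j * n * k + j * h * n ^ 2), ?_⟩
    rw [hs, hx]
    push_cast
    rw [hdz]
    ring
  have hG := gauss_eval d hd hd3 ω hω n hndvd
  have hwd : ω ^ d = 1 := by rw [hω]; exact (Complex.isPrimitiveRoot_exp d hd0).pow_eq_one
  have hshift := sum_range_shift d (fun j => ω ^ (n * j ^ 2)) (fun j => by
    show ω ^ (n * (j + d) ^ 2) = ω ^ (n * j ^ 2)
    rw [show n * (j + d) ^ 2 = n * j ^ 2 + d * (n * (2 * j + d)) by ring, pow_add, pow_mul ω d, hwd,
      one_pow, mul_one]) s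
  have heps : epsd d ≠ 0 := by unfold epsd; split_ifs <;> simp
  have hleg : (legSym d n : ℂ) ≠ 0 := by
    have : (n : ZMod d) ≠ 0 := by rwa [Ne, ZMod.natCast_eq_zero_iff]
    unfold legSym
    simp only [Int.cast_natCast, if_neg this]
    split_ifs <;> simp
  have hexp : Complex.exp (-(Real.pi * Complex.I * (gph n d : ℂ)) / (24 * d)) = ph d (-gph n d) := by
    have hdc : (d : ℂ) ≠ 0 := by exact_mod_cast hd0
    unfold ph; congr 1; push_cast; field_simp; ring
  rw [Finset.sum_congr rfl (fun (j : Fin d) _ => hterm j), ← Finset.mul_sum,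
    ← Finset.sum_range (fun j => ω ^ (n * (j + s) ^ 2)), hshift, hG, hl, hexp]
  have hfin : ph d (-gph n d) * ph d (-(48 * (n * s ^ 2)))
      = bobPhase d k x * star (bobPhase d k y) := by
    rw [bobPhase, bobPhase, ph_star, ← ph_add, ← ph_add]
    apply ph_congr hd0
    obtain ⟨c1, hc1⟩ := gph_congr h n d hh
    obtain ⟨c2, hc2⟩ := bobExp_increment h (y + k) n
    obtain ⟨c3, hc3⟩ := bobExp_periodic h (y + k + n) q
    rw [← hdz] at hc2 hc3
    have hx' : (x : ℤ) + k = y + k + n + d * q := by rw [hx]; ring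
    rw [hx']
    refine ⟨c2 - c1 - c3, ?_⟩
    rw [hs]; push_cast
    have e : (h : ℤ) * (k + y + h * n) = h * (y + k + h * n) := by ring
    rw [e]
    linear_combination hc2 - hc1 - hc3
  rw [← hfin]
  field_simp

lemma sum_modEq_ite (d n : ℕ) (hd : 0 < d) (y : Fin d) (f : Fin d → ℂ) (c : ℂ)
    (hf : ∀ x : Fin d, (y : ℕ) + n ≡ x [MOD d] → f x = c) :
    ∑ x : Fin d, (if (y : ℕ) + n ≡ x [MOD d] then f x else 0) = c := by
  have hx0 : (y : ℕ) + n ≡ ((⟨(y + n) % d, Nat.mod_lt _ hd⟩ : Fin d) : ℕ) [MOD d] :=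
    (Nat.mod_modEq _ _).symm
  rw [Finset.sum_eq_single ⟨(y + n) % d, Nat.mod_lt _ hd⟩]
  · rw [if_pos hx0]; exact hf _ hx0
  · intro b _ hb
    rw [if_neg]
    intro hm
    exact hb (Fin.ext (Nat.ModEq.eq_of_lt_of_lt (hm.symm.trans hx0) b.2 (Nat.mod_lt _ hd)))
  · simp

/-- The contribution of one Fourier mode for the optimal realisation, given the Fourier relation
between Alice's and Bob's phases with constant `c`. -/
lemma trace_mode_eq {d : ℕ} (hd : 0 < d) {ω : ℂ} (hω : IsPrimitiveRoot ω d)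
    (τ σ : ℕ → ℕ → ℂ) (hσ : ∀ k x, σ k x * star (σ k x) = 1) (n : ℕ) (l c : ℂ)
    (h : ∀ k x y : ℕ, x < d → y < d → y + n ≡ x [MOD d] →
      l * ∑ j : Fin d, ω ^ (n * (j : ℕ) * k) * (τ j x * star (τ j y))
        = c * (σ k x * star (σ k y))) :
    ((l • ∑ j : Fin d, ∑ k : Fin d, ω ^ (n * (j : ℕ) * (k : ℕ)) •
        ((∑ a : Fin d, ω ^ ((a : ℕ) * n) • phasePOVM d ω (τ j) a) ⊗ₖ
          (∑ b : Fin d, ω ^ ((b : ℕ) * n) • phasePOVM d ω (fun x => star (σ k x)) b)))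
        * maxEnt d).trace = c * d := by
  have hdc : (d : ℂ) ≠ 0 := by exact_mod_cast hd.ne'
  simp only [smul_mul_assoc, Finset.sum_mul, trace_smul, trace_sum, trace_kronecker_maxEnt,
    phasePOVM_fourier hd.ne' hω, smul_eq_mul, star_star]
  have h1 : ∀ k y : Fin d, ∑ x : Fin d, (if (y : ℕ) + n ≡ x [MOD d] then
      (star (σ k x) * σ k y) * (l * ∑ j : Fin d, ω ^ (n * (j : ℕ) * k) * (τ j x * star (τ j y)))
      else 0) = c := by
    intro k y
    apply sum_modEq_ite d n hd
    intro x hx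
    rw [h k x y x.2 y.2 hx]
    linear_combination c * (σ k y * star (σ k y)) * hσ k x + c * hσ k y
  have h2 : ∑ k : Fin d, ∑ y : Fin d, ∑ x : Fin d, (if (y : ℕ) + n ≡ x [MOD d] then
      (star (σ k x) * σ k y) * (l * ∑ j : Fin d, ω ^ (n * (j : ℕ) * k) * (τ j x * star (τ j y)))
      else 0) = d * (d * c) := by
    rw [Finset.sum_congr rfl (fun k _ => Finset.sum_congr rfl (fun y _ => h1 k y))]
    simp
  have h3 : ∀ k y x : Fin d, (if (y : ℕ) + n ≡ x [MOD d] then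
      (star (σ k x) * σ k y) * (l * ∑ j : Fin d, ω ^ (n * (j : ℕ) * k) * (τ j x * star (τ j y)))
      else 0) = ∑ j : Fin d, l * (ω ^ (n * (j : ℕ) * k) *
        ((if (y : ℕ) + n ≡ x [MOD d] then τ j x * star (τ j y) else 0) *
         (if (y : ℕ) + n ≡ x [MOD d] then star (σ k x) * σ k y else 0))) := by
    intro k y x
    split_ifs
    · rw [Finset.mul_sum, Finset.mul_sum]
      exact Finset.sum_congr rfl fun j _ => by ring
    · simp
  simp only [h3] at h2
  have h4 : l * ∑ j : Fin d, ∑ k : Fin d, ω ^ (n * (j : ℕ) * k) * ((d : ℂ)⁻¹ *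
      ∑ x : Fin d, ∑ y : Fin d,
        ((if (y : ℕ) + n ≡ x [MOD d] then τ j x * star (τ j y) else 0) *
         (if (y : ℕ) + n ≡ x [MOD d] then star (σ k x) * σ k y else 0)))
      = (d : ℂ)⁻¹ * (d * (d * c)) := by
    rw [← h2]
    have h5 : ∀ k : Fin d, ∑ y : Fin d, ∑ x : Fin d, ∑ j : Fin d, l * (ω ^ (n * (j : ℕ) * k) *
        ((if (y : ℕ) + n ≡ x [MOD d] then τ j x * star (τ j y) else 0) *
         (if (y : ℕ) + n ≡ x [MOD d] then star (σ k x) * σ k y else 0)))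
        = ∑ j : Fin d, ∑ x : Fin d, ∑ y : Fin d, l * (ω ^ (n * (j : ℕ) * k) *
        ((if (y : ℕ) + n ≡ x [MOD d] then τ j x * star (τ j y) else 0) *
         (if (y : ℕ) + n ≡ x [MOD d] then star (σ k x) * σ k y else 0))) := by
      intro k
      rw [Finset.sum_comm]
      rw [Finset.sum_congr rfl (fun x _ => Finset.sum_comm), Finset.sum_comm]
    rw [Finset.sum_congr rfl (fun k _ => h5 k), Finset.sum_comm, Finset.mul_sum, Finset.mul_sum]
    refine Finset.sum_congr rfl fun j _ => ?_
    rw [Finset.mul_sum, Finset.mul_sum]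
    refine Finset.sum_congr rfl fun k _ => ?_
    rw [← mul_assoc, ← mul_assoc, mul_comm _ ((d : ℂ)⁻¹), mul_assoc]
    congr 1
    simp only [Finset.mul_sum]
    exact Finset.sum_congr rfl fun x _ => Finset.sum_congr rfl fun y _ => by ring
  rw [h4]
  field_simp

/-! ### The quantum value -/

lemma epsd_mul_star (d : ℕ) : epsd d * star (epsd d) = 1 := by
  unfold epsd; split_ifs <;> simp

lemma canonicalPhase_mul_star {d n : ℕ} (hd : d ≠ 0) (hn : ¬ d ∣ n) {l : ℂ}
    (hl : l = (epsd d)⁻¹ * ((legSym d n : ℂ))⁻¹ *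
        Complex.exp (-(Real.pi * Complex.I * (gph n d : ℂ)) / (24 * d))) :
    l * star l = 1 := by
  have hleg : (legSym d n : ℂ)⁻¹ * star ((legSym d n : ℂ)⁻¹) = 1 := by
    have : (n : ZMod d) ≠ 0 := by rwa [Ne, ZMod.natCast_eq_zero_iff]
    unfold legSym
    simp only [Int.cast_natCast, if_neg this]
    split_ifs <;> simp
  have heps : (epsd d)⁻¹ * star ((epsd d)⁻¹) = 1 := by
    rw [star_inv₀, ← mul_inv, epsd_mul_star, inv_one]
  have hexp : Complex.exp (-(Real.pi * Complex.I * (gph n d : ℂ)) / (24 * d))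
      = ph d (-gph n d) := by
    have hdc : (d : ℂ) ≠ 0 := by exact_mod_cast hd
    unfold ph; congr 1; push_cast; field_simp; ring
  rw [hl, hexp, star_mul, star_mul]
  linear_combination (ph d (-gph n d) * star (ph d (-gph n d)))
    * ((epsd d)⁻¹ * star ((epsd d)⁻¹)) * hleg
    + (ph d (-gph n d) * star (ph d (-gph n d))) * heps
    + ph_mul_star d (-gph n d)

/-- The total value: the mode `n = 0` contributes `d ^ 2`, each of the other `d - 1` modes
contributes `d * √d`. -/
lemma value_eq {d : ℕ} (hd : 0 < d) :
    (1 / (d : ℝ) ^ 3) * ((d : ℝ) ^ 2 + ((d - 1 : ℕ) : ℝ) * (d * Real.sqrt d))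
      = 1 / d + (d - 1) / (d * Real.sqrt d) := by
  have h1 : (0 : ℝ) < d := by exact_mod_cast hd
  have h2 : 0 < Real.sqrt d := Real.sqrt_pos.mpr h1
  have h3 : Real.sqrt d * Real.sqrt d = d := Real.mul_self_sqrt h1.le
  rw [Nat.cast_sub hd, Nat.cast_one]
  have h4 : (d : ℝ) * Real.sqrt d ≠ 0 := by positivity
  rw [show (1 : ℝ) / d = d ^ 2 / d ^ 3 by field_simp,
    show ((d : ℝ) - 1) / (d * Real.sqrt d) = (d - 1) * (d * Real.sqrt d) / d ^ 3 by
      rw [div_eq_div_iff h4 (by positivity)]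
      linear_combination (-((d : ℝ) - 1) * d ^ 2) * h3]
  field_simp

/-- the quantum value of the modified Buhrman-Massar Bell functional
with the canonical phases equals `1/d + (d-1)/(d√d)`, and the supremum over all
quantum realisations (all dimensions, density matrices and POVMs) is attained. -/
theorem quantum_value_of_modified_BM
    (d : ℕ) (hd : d.Prime) (hd3 : 3 ≤ d)
    (ω : ℂ) (hω : ω = Complex.exp (2 * Real.pi * Complex.I / d))
    (lam : ℕ → ℂ) (hlam0 : lam 0 = 1)
    (hlam : ∀ n : ℕ, 1 ≤ n → n ≤ d - 1 →
      lam n = (epsd d)⁻¹ * ((legSym d n : ℂ))⁻¹ *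
        Complex.exp (-(Real.pi * Complex.I * (gph n d : ℂ)) / (24 * d))) :
    IsGreatest
      { x : ℝ | ∃ (DA DB : ℕ)
          (ρ : Matrix (Fin DA × Fin DB) (Fin DA × Fin DB) ℂ)
          (F : Fin d → Fin d → Matrix (Fin DA) (Fin DA) ℂ)
          (G : Fin d → Fin d → Matrix (Fin DB) (Fin DB) ℂ),
          ρ.PosSemidef ∧ ρ.trace = 1 ∧
          (∀ j a, (F j a).PosSemidef) ∧ (∀ j, ∑ a : Fin d, F j a = 1) ∧
          (∀ k b, (G k b).PosSemidef) ∧ (∀ k, ∑ b : Fin d, G k b = 1) ∧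
          (((1 / (d : ℂ) ^ 3) • ∑ n ∈ Finset.range d, lam n •
              ∑ j : Fin d, ∑ k : Fin d, ω ^ (n * (j : ℕ) * (k : ℕ)) •
                ((∑ a : Fin d, ω ^ ((a : ℕ) * n) • F j a) ⊗ₖ
                  (∑ b : Fin d, ω ^ ((b : ℕ) * n) • G k b))) * ρ).trace = (x : ℂ) }
      (1 / d + (d - 1) / (d * Real.sqrt d)) := by
  have hd0 : d ≠ 0 := by omega
  have hdpos : 0 < d := by omega
  have hω' : IsPrimitiveRoot ω d := hω ▸ Complex.isPrimitiveRoot_exp d hd0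
  have hsplit : ∀ f : ℕ → ℂ, ∑ n ∈ Finset.range d, f n
      = f 0 + ∑ n ∈ Finset.range (d - 1), f (n + 1) := by
    intro f
    rw [show d = (d - 1) + 1 by omega, Finset.sum_range_succ', add_comm]
    simp
  have hndvd : ∀ n ∈ Finset.range (d - 1), ¬ d ∣ n + 1 := by
    intro n hn hdvd
    have := Nat.le_of_dvd n.succ_pos hdvd
    have := Finset.mem_range.mp hn
    omega
  constructor
  · obtain ⟨h, hh⟩ : ∃ h, d + 1 = 2 * h := by
      obtain ⟨m, hm⟩ := hd.odd_of_ne_two (by omega)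
      exact ⟨m + 1, by omega⟩
    have hτ : ∀ j x, alicePhase d h j x * star (alicePhase d h j x) = 1 :=
      fun j x => ph_mul_star _ _
    have hσ : ∀ k x, bobPhase d k x * star (bobPhase d k x) = 1 := fun k x => ph_mul_star _ _
    refine ⟨d, d, maxEnt d, fun j => phasePOVM d ω (alicePhase d h j),
      fun k => phasePOVM d ω (fun x => star (bobPhase d k x)), maxEnt_posSemidef d,
      maxEnt_trace d hd0, fun j a => phasePOVM_posSemidef _ _ _ _,
      fun j => phasePOVM_sum hd0 hω' _ (hτ j), fun k b => phasePOVM_posSemidef _ _ _ _,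
      fun k => phasePOVM_sum hd0 hω' _ fun x => by rw [star_star, mul_comm]; exact hσ k x, ?_⟩
    have hmode0 := trace_mode_eq hdpos hω' (alicePhase d h) (bobPhase d) hσ 0 (lam 0) d (by
      intro k x y hx hy hxy
      have : x = y := (Nat.ModEq.eq_of_lt_of_lt hxy hy hx).symm
      subst this
      simp [hlam0, hτ, hσ, -Complex.star_def, -RCLike.star_def])
    have hmode : ∀ n ∈ Finset.range (d - 1), _ := fun n hn =>
      trace_mode_eq hdpos hω' (alicePhase d h) (bobPhase d) hσ (n + 1) (lam (n + 1))
        (Real.sqrt d : ℂ) (fun k x y _ _ hxy =>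
          have hn' := Finset.mem_range.mp hn
          fourier_alice_eq_bob d h hd hd3 hh ω hω _ (n + 1) (by omega) (by omega)
            (hlam (n + 1) (by omega) (by omega)) k x y hxy)
    rw [smul_mul_assoc, trace_smul, Finset.sum_mul, trace_sum, hsplit, hmode0,
      Finset.sum_congr rfl hmode, ← value_eq hdpos]
    rw [Finset.sum_const, Finset.card_range, nsmul_eq_mul, smul_eq_mul]
    push_cast
    ring
  · rintro x ⟨DA, DB, ρ, F, G, hρ, hρ1, hF, hF1, hG, hG1, hx⟩
    rw [smul_mul_assoc, trace_smul, Finset.sum_mul, trace_sum, hsplit] at hx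
    have hmode0 : (((lam 0 • ∑ j : Fin d, ∑ k : Fin d, ω ^ (0 * (j : ℕ) * (k : ℕ)) •
        ((∑ a : Fin d, ω ^ ((a : ℕ) * 0) • F j a) ⊗ₖ
          (∑ b : Fin d, ω ^ ((b : ℕ) * 0) • G k b))) * ρ).trace) = (d : ℂ) ^ 2 := by
      simp [hlam0, hF1, hG1, ← Nat.cast_smul_eq_nsmul ℂ, hρ1]
      ring
    have hmode : ∀ n ∈ Finset.range (d - 1),
        (((lam (n + 1) • ∑ j : Fin d, ∑ k : Fin d, ω ^ ((n + 1) * (j : ℕ) * (k : ℕ)) •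
        ((∑ a : Fin d, ω ^ ((a : ℕ) * (n + 1)) • F j a) ⊗ₖ
          (∑ b : Fin d, ω ^ ((b : ℕ) * (n + 1)) • G k b))) * ρ).trace).re ≤ d * Real.sqrt d := by
      intro n hn
      have hn' := Finset.mem_range.mp hn
      have hz : ∀ a : Fin d, ω ^ ((a : ℕ) * (n + 1)) * star (ω ^ ((a : ℕ) * (n + 1))) = 1 := by
        intro a
        rw [star_pow, ← mul_pow, hω'.mul_star_self hd0, one_pow]
      have hζ : IsPrimitiveRoot (ω ^ (n + 1)) d :=
        hω'.pow_of_coprime _ ((hd.coprime_iff_not_dvd.mpr (hndvd n hn)).symm)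
      refine re_trace_mode_le hdpos (fun j => ∑ a : Fin d, ω ^ ((a : ℕ) * (n + 1)) • F j a)
        (fun k => ∑ b : Fin d, ω ^ ((b : ℕ) * (n + 1)) • G k b)
        (fun j => posSemidef_one_sub_mul_conjTranspose (F j) (hF j) (hF1 j) _ hz) ?_ ρ hρ hρ1 _
        (canonicalPhase_mul_star hd0 (hndvd n hn) (hlam (n + 1) (by omega) (by omega)))
        (fun j k => ω ^ ((n + 1) * (j : ℕ) * (k : ℕ))) ?_
      · intro k
        have := posSemidef_one_sub_mul_conjTranspose (G k) (hG k) (hG1 k)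
          (fun b : Fin d => star (ω ^ ((b : ℕ) * (n + 1))))
          (fun b => by rw [star_star, mul_comm]; exact hz b)
        -- The adjoint of a Fourier coefficient is the coefficient with the conjugate phases.
        have e : (∑ b : Fin d, ω ^ ((b : ℕ) * (n + 1)) • G k b)ᴴ
            = ∑ b : Fin d, star (ω ^ ((b : ℕ) * (n + 1))) • G k b := by
          rw [conjTranspose_sum]
          exact Finset.sum_congr rfl fun b _ => by
            rw [conjTranspose_smul, (hG k b).isHermitian.eq]
        rw [← e, conjTranspose_conjTranspose] at this
        exact this
      · intro j j'
        have := sum_root_orthogonal hd0 hζ j j'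
        simp only [mul_assoc (n + 1), pow_mul ω (n + 1)]
        rw [this]
        exact if_congr ⟨fun e => Fin.ext (Nat.ModEq.eq_of_lt_of_lt e j.2 j'.2),
          fun e => e ▸ rfl⟩ rfl rfl
    have hre := congrArg Complex.re hx
    have hc : (1 / (d : ℂ) ^ 3) = ((1 / (d : ℝ) ^ 3 : ℝ) : ℂ) := by push_cast; rfl
    rw [hmode0, hc, smul_eq_mul, Complex.re_ofReal_mul, Complex.add_re, Complex.re_sum,
      Complex.ofReal_re, show ((d : ℂ) ^ 2).re = (d : ℝ) ^ 2 by norm_cast] at hre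
    rw [← hre, ← value_eq hdpos]
    have hsum := Finset.sum_le_card_nsmul _ _ _ hmode
    rw [Finset.card_range, nsmul_eq_mul] at hsum
    gcongr

end
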